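/- arXiv:1303.0503 — 2 statements merged into one kernel-verified Lean document; each statement's English description precedes it below -/
import Mathlib

section
/- Let p = 3 and q = p^m with m an even positive integer. Then n_{1,0} − n_{−1,0} + p⁵(n_{1,2} − n_{−1,2}) + p^{10}(n_{1,4} − n_{−1,4}) = (5(p^m − 1)(8p^m − 2p − 10) − p^{2m} + 1)·p^{m/2}. -/
open Complex Finset

noncomputable def zetaPow (p : ℕ) (a : ZMod p) : ℂ :=
  Complex.exp (2 * Real.pi * Complex.I * (a.val : ℂ) / (p : ℂ))

noncomputable def expSum (p m : ℕ) [Fact p.Prime]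
    (α β γ : GaloisField p m) : ℂ :=
  letI : Fintype (GaloisField p m) := Fintype.ofFinite _
  ∑ x : GaloisField p m,
    zetaPow p ((Algebra.trace (ZMod p) (GaloisField p m))
      (α * x ^ 2 + β * x ^ (p + 1) + γ * x ^ (p ^ 2 + 1)))

noncomputable def nval (p m : ℕ) (ε : ℤ) (j : ℕ) : ℂ :=
  if j % 2 = 0 then (ε : ℂ) * ((Real.sqrt ((p : ℝ) ^ (m + j)) : ℝ) : ℂ)
  else (ε : ℂ) * Complex.I * ((Real.sqrt ((p : ℝ) ^ (m + j)) : ℝ) : ℂ)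

noncomputable def nn (p m : ℕ) [Fact p.Prime] (ε : ℤ) (j : ℕ) : ℕ :=
  {t : GaloisField p m × GaloisField p m × GaloisField p m |
    t ≠ (0, 0, 0) ∧ expSum p m t.1 t.2.1 t.2.2 = nval p m ε j}.ncard

/-!
The sum `S(α, β, γ)` is the exponential sum of the quadratic form
`Q(x) = Tr (αx² + βx^(p+1) + γx^(p²+1))` over `F_p`, whose radical consists of roots of a linearized
polynomial of degree at most `p⁴`. If the rank of `Q` is odd, multiplying `(α, β, γ)` by a
nonsquare of `F_p` negates `S`; if it is even, then `S = ±p^((m+j)/2)` with `j ∈ {0, 2, 4}` the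
dimension of the radical. The odd ranks thus cancel in `∑ S⁵`, which leaves the left-hand side
of the identity, up to the factor `p^(5m/2)` and the term `q⁵` at the origin.

By orthogonality `∑ S⁵` is `q³` times the number of `x ∈ F_q⁵` with `x · x = x · σx = x · σ²x = 0`,
where `σ` is the coordinatewise Frobenius. In dimension five totally isotropic subspaces have
dimension at most two, so these equations place every `σⁿx` in the totally isotropic span of `x`
and `σx`. Hence all `σʲx · σᵏx` vanish, which says that the coordinate vectors of `x` in a basis of
`F_q` over `F_p` are pairwise orthogonal and isotropic. Such `m`-tuples in `F_p⁵` are counted one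
vector at a time: the isotropic vectors orthogonal to a totally isotropic `W` are counted by a
Gauss sum on `W^⊥`, whose radical is `W`.
-/

section TotallyIsotropic

open Module

variable {F V : Type*} [Field F] [AddCommGroup V] [Module F V]
  {B : LinearMap.BilinForm F V}

lemma span_le_orthogonal_span {s : Set V} (h : ∀ u ∈ s, ∀ v ∈ s, B u v = 0) :
    Submodule.span F s ≤ B.orthogonal (Submodule.span F s) := by
  intro v hv u hu
  induction hu, hv using Submodule.span_induction₂ with
  | mem_mem u v hu hv => exact h u hu v hv
  | zero_left => simp
  | zero_right => simp
  | add_left _ _ _ _ _ _ h₁ h₂ => simp_all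
  | add_right _ _ _ _ _ _ h₁ h₂ => simp_all
  | smul_left _ _ _ _ _ h => simp_all
  | smul_right _ _ _ _ _ h => simp_all

lemma sup_span_singleton_le_orthogonal (hB : B.IsSymm) {W : Submodule F V}
    (hW : W ≤ B.orthogonal W) {v : V} (hv : v ∈ B.orthogonal W) (hvv : B v v = 0) :
    W ⊔ Submodule.span F {v} ≤ B.orthogonal (W ⊔ Submodule.span F {v}) := by
  rw [← Submodule.span_eq W, ← Submodule.span_union]
  refine span_le_orthogonal_span ?_
  rintro x (hx | rfl) y (hy | rfl)
  · exact hW hy x hx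
  · exact hv x hx
  · rw [hB.eq]; exact hv y hy
  · exact hvv

lemma two_mul_finrank_le_of_le_orthogonal [FiniteDimensional F V] (hB : B.Nondegenerate)
    {W : Submodule F V} (hW : W ≤ B.orthogonal W) : 2 * finrank F W ≤ finrank F V := by
  have h := Submodule.finrank_mono hW
  rw [LinearMap.BilinForm.finrank_orthogonal hB] at h
  have := W.finrank_le
  lia

lemma mem_of_mem_orthogonal_of_finrank_le [FiniteDimensional F V] (hB : B.IsSymm)
    (hnd : B.Nondegenerate) {W : Submodule F V} (hW : W ≤ B.orthogonal W)
    (hdim : finrank F V ≤ 2 * finrank F W + 1) {v : V} (hv : v ∈ B.orthogonal W)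
    (hvv : B v v = 0) : v ∈ W := by
  have h := two_mul_finrank_le_of_le_orthogonal hnd
    (sup_span_singleton_le_orthogonal hB hW hv hvv)
  rw [Submodule.eq_of_le_of_finrank_le (le_sup_left : W ≤ W ⊔ Submodule.span F {v}) (by lia)]
  exact Submodule.mem_sup_right (Submodule.mem_span_singleton_self v)

end TotallyIsotropic

section GaussSum

open Module QuadraticMap

variable {F : Type*} [Field F] [Fintype F] {R : Type*} [CommRing R]

/-- The quadratic Gauss sum of an additive character `ψ`. In odd characteristic and for `ψ ≠ 1` it
agrees with `gaussSum` of the quadratic character. -/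
def quadraticGaussSum (ψ : AddChar F R) : R := ∑ x, ψ (x ^ 2)

variable [DecidableEq F]

lemma sum_comp_sq (hF : ringChar F ≠ 2) (f : F → R) :
    ∑ x, f (x ^ 2) = ∑ y, (quadraticChar F y + 1) * f y := by
  rw [← Finset.sum_fiberwise' univ (fun x : F ↦ x ^ 2) f]
  refine Finset.sum_congr rfl fun y _ ↦ ?_
  have h := congrArg (Int.cast : ℤ → R) (quadraticChar_card_sqrts hF y)
  push_cast at h
  rw [Finset.sum_const, nsmul_eq_mul, ← h]
  congr 3
  ext x
  simp

variable [IsDomain R] {ψ : AddChar F R}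

lemma sum_addChar_mul_sq_eq_gaussSum (hF : ringChar F ≠ 2) (hψ : ψ.IsPrimitive) {a : F}
    (ha : a ≠ 0) : ∑ x, ψ (a * x ^ 2) =
      gaussSum ((quadraticChar F).ringHomComp (Int.castRingHom R)) (ψ.mulShift a) := by
  rw [sum_comp_sq hF fun x ↦ ψ (a * x)]
  simp_rw [add_one_mul, Finset.sum_add_distrib, mul_comm a, AddChar.sum_mulShift a hψ]
  simp [gaussSum, ha, mul_comm a]

lemma quadraticGaussSum_eq_gaussSum (hF : ringChar F ≠ 2) (hψ : ψ.IsPrimitive) :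
    quadraticGaussSum ψ = gaussSum ((quadraticChar F).ringHomComp (Int.castRingHom R)) ψ := by
  simpa [quadraticGaussSum] using sum_addChar_mul_sq_eq_gaussSum hF hψ one_ne_zero

lemma sum_addChar_mul_sq (hF : ringChar F ≠ 2) (hψ : ψ.IsPrimitive) {a : F} (ha : a ≠ 0) :
    ∑ x, ψ (a * x ^ 2) = quadraticChar F a * quadraticGaussSum ψ := by
  have hshift := gaussSum_mulShift ((quadraticChar F).ringHomComp (Int.castRingHom R)) ψ
    (Units.mk0 a ha)
  have hsq : (quadraticChar F a : R) * quadraticChar F a = 1 := by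
    rw [← pow_two]
    exact_mod_cast congrArg (Int.cast : ℤ → R) (quadraticChar_sq_one ha)
  rw [quadraticGaussSum_eq_gaussSum hF hψ, ← hshift, sum_addChar_mul_sq_eq_gaussSum hF hψ ha,
    ← mul_assoc]
  exact (one_mul _).symm.trans (congrArg (· * _) hsq.symm)

lemma quadraticGaussSum_sq [CharZero R] (hF : ringChar F ≠ 2) (hψ : ψ.IsPrimitive) :
    quadraticGaussSum ψ ^ 2 = quadraticChar F (-1) * Fintype.card F := by
  rw [quadraticGaussSum_eq_gaussSum hF hψ, gaussSum_sq _ _ hψ]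
  · rfl
  · exact (MulChar.ringHomComp_ne_one_iff (RingHom.injective_int _)).mpr (quadraticChar_ne_one hF)
  · exact (quadraticChar_isQuadratic F).comp _

lemma sum_addChar_weightedSumSquares (hF : ringChar F ≠ 2) (hψ : ψ.IsPrimitive) {ι : Type*}
    [Fintype ι] [DecidableEq ι] (w : ι → F) :
    ∑ v : ι → F, ψ (weightedSumSquares F w v) =
      quadraticChar F (∏ i with w i ≠ 0, w i) * Fintype.card F ^ #{i | w i = 0} *
        quadraticGaussSum ψ ^ #{i | w i ≠ 0} := by
  have hfactor (v : ι → F) : ψ (weightedSumSquares F w v) = ∏ i, ψ (w i * v i ^ 2) := by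
    simp_rw [weightedSumSquares_apply, smul_eq_mul, ← pow_two]
    exact map_prod ψ.toMonoidHom (fun i ↦ Multiplicative.ofAdd (w i * v i ^ 2)) univ
  have hzero : ∀ i ∈ ({i | w i = 0} : Finset ι), ∑ x, ψ (w i * x ^ 2) = Fintype.card F := by
    simp +contextual
  have hne : ∀ i ∈ ({i | w i ≠ 0} : Finset ι),
      ∑ x, ψ (w i * x ^ 2) = quadraticChar F (w i) * quadraticGaussSum ψ := fun i hi ↦
    sum_addChar_mul_sq hF hψ (by simpa using hi)
  simp_rw [hfactor]
  rw [← Fintype.piFinset_univ, Finset.sum_prod_piFinset univ fun i x ↦ ψ (w i * x ^ 2),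
    ← Finset.prod_filter_mul_prod_filter_not univ (fun i ↦ w i = 0), Finset.prod_congr rfl hzero,
    Finset.prod_congr rfl hne, Finset.prod_const, Finset.prod_mul_distrib, Finset.prod_const,
    map_prod]
  push_cast
  ring

variable {V : Type*} [AddCommGroup V] [Module F V] [Fintype V]

/-- Diagonalizing `Q` turns the sum into a product of one-variable Gauss sums, one factor `|F|` for
each dimension of the radical. -/
lemma exists_sum_addChar_quadraticForm_eq (hF : ringChar F ≠ 2) (hψ : ψ.IsPrimitive)
    (Q : QuadraticForm F V) : ∃ d : F, d ≠ 0 ∧ ∀ c ≠ 0, ∑ v, ψ (c * Q v) =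
      quadraticChar F (c ^ (finrank F V - finrank F Q.radical) * d) *
        Fintype.card F ^ finrank F Q.radical *
          quadraticGaussSum ψ ^ (finrank F V - finrank F Q.radical) := by
  have : NeZero (2 : F) := ⟨Ring.two_ne_zero hF⟩
  let := invertibleOfNonzero (two_ne_zero (α := F))
  obtain ⟨w, hQ⟩ := QuadraticForm.equivalent_weightedSumSquares Q
  have hrad : #{i | w i = 0} = finrank F Q.radical := by
    rw [QuadraticForm.finrank_radical_of_equiv_weightedSumSquares hQ, ← Set.ncard_coe_finset]
    simp
  have hrank : #{i | w i ≠ 0} = finrank F V - finrank F Q.radical := by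
    have := Finset.card_filter_add_card_filter_not (s := univ) fun i ↦ w i = 0
    rw [Finset.card_univ, Fintype.card_fin] at this
    lia
  obtain ⟨e⟩ := hQ
  refine ⟨∏ i with w i ≠ 0, w i, Finset.prod_ne_zero_iff.mpr (by simp), fun c hc ↦ ?_⟩
  have hsum : ∑ v, ψ (c * Q v) = ∑ v, ψ (weightedSumSquares F (fun i ↦ c * w i) v) :=
    Fintype.sum_equiv e.toEquiv _ _ fun v ↦ by
      have h := e.map_app v
      rw [weightedSumSquares_apply] at h
      simp [← h, weightedSumSquares_apply, Finset.mul_sum, mul_assoc]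
  rw [hsum, sum_addChar_weightedSumSquares hF hψ]
  simp [hc, Finset.prod_mul_distrib, hrad, hrank]

lemma card_mul_card_isotropic (hF : ringChar F ≠ 2) {Q : QuadraticForm F V}
    (hQ : Odd (finrank F V - finrank F Q.radical)) :
    Fintype.card F * #{v | Q v = 0} = Fintype.card V := by
  let ψ := AddChar.FiniteField.primitiveChar_to_Complex F
  have hψ : ψ.IsPrimitive := AddChar.FiniteField.primitiveChar_to_Complex_isPrimitive F
  obtain ⟨d, -, hd⟩ := exists_sum_addChar_quadraticForm_eq hF hψ Q
  have hχ : ∑ c : F, (quadraticChar F c : ℂ) = 0 := by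
    exact_mod_cast congrArg (Int.cast : ℤ → ℂ) (quadraticChar_sum_zero hF)
  have hpow (c : F) : quadraticChar F c ^ (finrank F V - finrank F Q.radical) =
      quadraticChar F c := by
    rcases eq_or_ne c 0 with rfl | hc
    · simp [hQ.pos.ne']
    · rcases quadraticChar_dichotomy hc with h | h <;> simp [h, hQ.neg_one_pow]
  have hcard : ∑ c, ∑ v, ψ (c * Q v) = (Fintype.card F * #{v | Q v = 0} : ℕ) := by
    rw [Finset.sum_comm]
    simp [AddChar.sum_mulShift _ hψ, Finset.sum_ite, mul_comm]
  have hzero : ∑ c ∈ univ.erase 0, ∑ v, ψ (c * Q v) = 0 := by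
    rw [Finset.sum_congr rfl fun c hc ↦ hd c (Finset.ne_of_mem_erase hc)]
    simp_rw [map_mul, map_pow, hpow, Int.cast_mul, ← Finset.sum_mul]
    rw [← Finset.sum_erase univ (a := 0) (by simp)] at hχ
    rw [hχ]
    simp
  rw [← Finset.add_sum_erase univ _ (Finset.mem_univ 0), hzero] at hcard
  simp only [zero_mul, AddChar.map_zero_eq_one, Finset.sum_const, Finset.card_univ, nsmul_eq_mul,
    mul_one, add_zero] at hcard
  exact_mod_cast hcard.symm

end GaussSum

section IsotropicTuples

open Module LinearMap.BilinMap

variable {F V : Type*} [Field F] [AddCommGroup V] [Module F V] {B : LinearMap.BilinForm F V}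

lemma mem_orthogonal_sup_span_singleton {W : Submodule F V} {u v : V} :
    u ∈ B.orthogonal (W ⊔ Submodule.span F {v}) ↔ u ∈ B.orthogonal W ∧ B v u = 0 := by
  simp only [LinearMap.BilinForm.mem_orthogonal_iff]
  refine ⟨fun h ↦ ⟨fun w hw ↦ h w (Submodule.mem_sup_left hw),
    h v (Submodule.mem_sup_right (Submodule.mem_span_singleton_self v))⟩, ?_⟩
  rintro ⟨hW, hv⟩ x hx
  obtain ⟨w, hw, y, hy, rfl⟩ := Submodule.mem_sup.mp hx
  obtain ⟨c, rfl⟩ := Submodule.mem_span_singleton.mp hy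
  simp [hW w hw, hv]

lemma finrank_radical_restrict_orthogonal [FiniteDimensional F V] (hF : ringChar F ≠ 2)
    (hB : B.IsSymm) (hnd : B.Nondegenerate) {W : Submodule F V} (hW : W ≤ B.orthogonal W) :
    finrank F (toQuadraticMap (B.restrict (B.orthogonal W))).radical = finrank F W := by
  have h2 : (2 : F) ≠ 0 := Ring.two_ne_zero hF
  let := invertibleOfNonzero h2
  have horth (v : V) : v ∈ W ↔ ∀ u ∈ B.orthogonal W, B v u = 0 := by
    conv_lhs => rw [← LinearMap.BilinForm.orthogonal_orthogonal hnd hB.isRefl W]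
    simp_rw [LinearMap.BilinForm.mem_orthogonal_iff (N := B.orthogonal W), hB.eq v]
  have hrad : (toQuadraticMap (B.restrict (B.orthogonal W))).radical =
      W.comap (B.orthogonal W).subtype := by
    rw [QuadraticMap.radical_eq_ker_polarBilin]
    ext v
    have hpolar (u : B.orthogonal W) :
        QuadraticMap.polarBilin (toQuadraticMap (B.restrict (B.orthogonal W))) v u =
          2 * B v u := by
      simp [polar_toQuadraticMap, hB.eq u, two_mul]
    simp [horth v, LinearMap.ext_iff, hpolar, h2]
  rw [hrad, (Submodule.comapSubtypeEquivOfLe hW).finrank_eq]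

variable [Fintype V]

open scoped Classical in
/-- The form induced on `W^⊥ / W` is nondegenerate of odd dimension `2 * d + 1`. -/
lemma card_isotropic_orthogonal [Fintype F] (hF : ringChar F ≠ 2) (hB : B.IsSymm)
    (hnd : B.Nondegenerate) {W : Submodule F V} (hW : W ≤ B.orthogonal W) {d : ℕ}
    (hd : finrank F V = 2 * (finrank F W + d) + 1) :
    #{v | v ∈ B.orthogonal W ∧ B v v = 0} = Fintype.card F ^ (finrank F W + 2 * d) := by
  have hrank : finrank F (B.orthogonal W) = finrank F W + 2 * d + 1 := by
    rw [LinearMap.BilinForm.finrank_orthogonal hnd]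
    lia
  have hcard := card_mul_card_isotropic hF
    (Q := toQuadraticMap (B.restrict (B.orthogonal W))) (by
      rw [finrank_radical_restrict_orthogonal hF hB hnd hW, hrank]
      exact ⟨d, by lia⟩)
  rw [card_eq_pow_finrank (K := F) (V := B.orthogonal W), hrank, pow_succ',
    Nat.mul_right_inj Fintype.card_ne_zero] at hcard
  rw [← hcard, ← Fintype.card_subtype, ← Fintype.card_subtype]
  exact Fintype.card_congr (Equiv.subtypeSubtypeEquivSubtypeInter _ _).symm

open scoped Classical in
/-- The number of `m`-tuples in the orthogonal complement of `W` which span a totally isotropic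
subspace for the bilinear form `B`. -/
noncomputable def isotropicTupleCount (B : LinearMap.BilinForm F V) (m : ℕ) (W : Submodule F V) :
    ℕ :=
  #{w : Fin m → V | (∀ j k, B (w j) (w k) = 0) ∧ ∀ j, w j ∈ B.orthogonal W}

lemma isotropicTupleCount_zero (W : Submodule F V) : isotropicTupleCount B 0 W = 1 := by
  simp [isotropicTupleCount]

open scoped Classical in
lemma isotropicTupleCount_succ (hB : B.IsSymm) (m : ℕ) (W : Submodule F V) :
    isotropicTupleCount B (m + 1) W = ∑ v with v ∈ B.orthogonal W ∧ B v v = 0,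
      isotropicTupleCount B m (W ⊔ Submodule.span F {v}) := by
  have hcons (v : V) (w : Fin m → V) :
      ((∀ j k : Fin (m + 1), B ((Fin.cons v w : Fin (m + 1) → V) j)
        ((Fin.cons v w : Fin (m + 1) → V) k) = 0) ∧
        ∀ j, (Fin.cons v w : Fin (m + 1) → V) j ∈ B.orthogonal W) ↔
      (v ∈ B.orthogonal W ∧ B v v = 0) ∧
        (∀ j k, B (w j) (w k) = 0) ∧ ∀ j, w j ∈ B.orthogonal (W ⊔ Submodule.span F {v}) := by
    simp only [mem_orthogonal_sup_span_singleton, Fin.forall_fin_succ, Fin.cons_zero,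
      Fin.cons_succ, hB.eq _ v, forall_and]
    tauto
  simp_rw [isotropicTupleCount, ← Finset.card_sigma]
  refine Finset.card_nbij' (fun w ↦ ⟨w 0, Fin.tail w⟩) (fun z ↦ Fin.cons z.1 z.2)
    (fun w hw ↦ ?_) (fun z hz ↦ ?_) (fun w _ ↦ Fin.cons_self_tail w) (fun z _ ↦ rfl)
  · rw [mem_coe, mem_filter_univ, ← Fin.cons_self_tail w, hcons] at hw
    simpa only [mem_coe, Finset.mem_sigma, mem_filter_univ] using hw
  · rw [mem_coe, mem_filter_univ, hcons]
    simpa only [mem_coe, Finset.mem_sigma, mem_filter_univ] using hz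

lemma isotropicTupleCount_succ_eq [Fintype F] (hF : ringChar F ≠ 2) (hB : B.IsSymm)
    (hnd : B.Nondegenerate) {W : Submodule F V} (hW : W ≤ B.orthogonal W) {d : ℕ}
    (hd : finrank F V = 2 * (finrank F W + d) + 1) {m : ℕ} {a : ℤ}
    (ha : ∀ v ∈ B.orthogonal W, B v v = 0 → v ∉ W →
      isotropicTupleCount B m (W ⊔ Submodule.span F {v}) = a) :
    (isotropicTupleCount B (m + 1) W : ℤ) = Fintype.card F ^ finrank F W *
      (isotropicTupleCount B m W + (Fintype.card F ^ (2 * d) - 1) * a) := by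
  classical
  have hmem : ∀ v ∈ ({v | (v ∈ B.orthogonal W ∧ B v v = 0) ∧ v ∈ W} : Finset V),
      (isotropicTupleCount B m (W ⊔ Submodule.span F {v}) : ℤ) = isotropicTupleCount B m W := by
    intro v hv
    rw [sup_eq_left.mpr (by simpa using (mem_filter_univ v).mp hv |>.2)]
  have hnot : ∀ v ∈ ({v | (v ∈ B.orthogonal W ∧ B v v = 0) ∧ v ∉ W} : Finset V),
      (isotropicTupleCount B m (W ⊔ Submodule.span F {v}) : ℤ) = a := by
    intro v hv
    obtain ⟨⟨hv, hvv⟩, hvW⟩ := (mem_filter_univ v).mp hv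
    exact ha v hv hvv hvW
  have hcardW : #{v | (v ∈ B.orthogonal W ∧ B v v = 0) ∧ v ∈ W} =
      Fintype.card F ^ finrank F W := by
    rw [← card_eq_pow_finrank (V := W), ← Fintype.card_subtype]
    exact Fintype.card_congr (Equiv.subtypeEquivRight fun v ↦
      and_iff_right_of_imp fun hv ↦ ⟨hW hv, hW hv v hv⟩)
  have hcard := Finset.card_filter_add_card_filter_not
    (s := {v | v ∈ B.orthogonal W ∧ B v v = 0}) fun v ↦ v ∈ W
  rw [Finset.filter_filter, Finset.filter_filter, hcardW,
    card_isotropic_orthogonal hF hB hnd hW hd] at hcard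
  have hcard' := congrArg (Nat.cast : ℕ → ℤ) hcard
  push_cast [pow_add] at hcard'
  rw [isotropicTupleCount_succ hB, Nat.cast_sum, ← Finset.sum_filter_add_sum_filter_not _ (· ∈ W),
    Finset.filter_filter, Finset.filter_filter, Finset.sum_congr rfl hmem,
    Finset.sum_congr rfl hnot, Finset.sum_const, Finset.sum_const, hcardW]
  simp only [nsmul_eq_mul, Nat.cast_pow]
  linear_combination a * hcard'

section ClosedForms

variable [Fintype F] {W : Submodule F V} (m : ℕ)

lemma isotropicTupleCount_of_finrank_eq_add_one (hF : ringChar F ≠ 2) (hB : B.IsSymm)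
    (hnd : B.Nondegenerate) (hW : W ≤ B.orthogonal W) (hd : finrank F V = 2 * finrank F W + 1) :
    (isotropicTupleCount B m W : ℤ) = Fintype.card F ^ (finrank F W * m) := by
  induction m with
  | zero => simp [isotropicTupleCount_zero]
  | succ m ih =>
    rw [isotropicTupleCount_succ_eq hF hB hnd hW (d := 0) hd (a := 0) fun v hv hvv hvW ↦
      (hvW (mem_of_mem_orthogonal_of_finrank_le hB hnd hW hd.le hv hvv)).elim, ih]
    ring

lemma isotropicTupleCount_of_finrank_eq_add_three (hF : ringChar F ≠ 2) (hB : B.IsSymm)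
    (hnd : B.Nondegenerate) (hW : W ≤ B.orthogonal W) (hd : finrank F V = 2 * finrank F W + 3) :
    (isotropicTupleCount B m W : ℤ) = Fintype.card F ^ (finrank F W * m) *
      (1 + (Fintype.card F + 1) * (Fintype.card F ^ m - 1)) := by
  induction m with
  | zero => simp [isotropicTupleCount_zero]
  | succ m ih =>
    rw [isotropicTupleCount_succ_eq hF hB hnd hW (d := 1) (by lia) fun v hv hvv hvW ↦ by
      have hrank := Submodule.finrank_sup_span_singleton hvW
      rw [isotropicTupleCount_of_finrank_eq_add_one m hF hB hnd
        (sup_span_singleton_le_orthogonal hB hW hv hvv) (by lia), hrank], ih]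
    ring

lemma isotropicTupleCount_of_finrank_eq_add_five (hF : ringChar F ≠ 2) (hB : B.IsSymm)
    (hnd : B.Nondegenerate) (hW : W ≤ B.orthogonal W) (hd : finrank F V = 2 * finrank F W + 5) :
    (isotropicTupleCount B m W : ℤ) = Fintype.card F ^ (finrank F W * m) *
      (1 + (Fintype.card F + 1) * (Fintype.card F ^ 2 + 1) * (Fintype.card F ^ m - 1) *
        (Fintype.card F ^ m - Fintype.card F + 1)) := by
  induction m with
  | zero => simp [isotropicTupleCount_zero]
  | succ m ih =>
    rw [isotropicTupleCount_succ_eq hF hB hnd hW (d := 2) (by lia) fun v hv hvv hvW ↦ by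
      have hrank := Submodule.finrank_sup_span_singleton hvW
      rw [isotropicTupleCount_of_finrank_eq_add_three m hF hB hnd
        (sup_span_singleton_le_orthogonal hB hW hv hvv) (by lia), hrank], ih]
    ring

end ClosedForms

end IsotropicTuples

section DotProduct

variable {F ι : Type*} [Field F] [Fintype ι]

variable (F ι) in
/-- The dot product on `ι → F`, with both scalar rings of `dotProductBilin` equal to `F`, as a
bilinear form. -/
abbrev dotForm : LinearMap.BilinForm F (ι → F) := dotProductBilin F F

lemma isSymm_dotForm : (dotForm F ι).IsSymm := ⟨dotProduct_comm⟩

lemma nondegenerate_dotForm : (dotForm F ι).Nondegenerate :=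
  (LinearMap.IsRefl.nondegenerate_iff_separatingLeft (B := dotForm F ι) isSymm_dotForm.isRefl).mpr
    fun _ ↦ dotProduct_eq_zero_iff.mp

end DotProduct

section Twist

variable {K ι : Type*} [Field K] [Fintype ι] {σ : K →+* K} {x : ι → K}

lemma span_twist_le_orthogonal (h₀ : x ⬝ᵥ x = 0) (h₁ : x ⬝ᵥ σ ∘ x = 0) :
    Submodule.span K {x, σ ∘ x} ≤
      (dotForm K ι).orthogonal (Submodule.span K {x, σ ∘ x}) := by
  have h₂ : σ ∘ x ⬝ᵥ σ ∘ x = 0 := by rw [← RingHom.map_dotProduct, h₀, map_zero]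
  refine span_le_orthogonal_span ?_
  rintro u (rfl | rfl) v (rfl | rfl)
  · exact h₀
  · exact h₁
  · exact (dotProduct_comm _ _).trans h₁
  · exact h₂

lemma twist_twist_mem_span (hι : Fintype.card ι ≤ 5) (h₀ : x ⬝ᵥ x = 0) (h₁ : x ⬝ᵥ σ ∘ x = 0)
    (h₂ : x ⬝ᵥ σ ∘ σ ∘ x = 0) : σ ∘ σ ∘ x ∈ Submodule.span K {x, σ ∘ x} := by
  by_cases hσ : σ ∘ x ∈ Submodule.span K {x}
  · obtain ⟨c, hc⟩ := Submodule.mem_span_singleton.mp hσ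
    refine Submodule.mem_span_pair.mpr ⟨0, σ c, ?_⟩
    conv_rhs => rw [← hc]
    ext i
    simp
  · have hx : x ≠ 0 := by
      rintro rfl
      exact hσ (Submodule.mem_span_singleton.mpr ⟨0, by ext; simp⟩)
    have hrank : Module.finrank K (Submodule.span K {x, σ ∘ x}) = 2 := by
      rw [Set.pair_comm, Submodule.span_insert, sup_comm,
        Submodule.finrank_sup_span_singleton hσ, finrank_span_singleton hx]
    have hσσ : σ ∘ x ⬝ᵥ σ ∘ σ ∘ x = 0 := by rw [← RingHom.map_dotProduct, h₁, map_zero]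
    refine mem_of_mem_orthogonal_of_finrank_le isSymm_dotForm nondegenerate_dotForm
      (span_twist_le_orthogonal h₀ h₁) ?_ ?_ ?_
    · rw [hrank]
      simpa
    · rw [Set.pair_comm, Submodule.span_insert, sup_comm, mem_orthogonal_sup_span_singleton,
        LinearMap.BilinForm.mem_orthogonal_iff]
      refine ⟨fun u hu ↦ ?_, hσσ⟩
      obtain ⟨c, rfl⟩ := Submodule.mem_span_singleton.mp hu
      simp [h₂]
    · simp [← RingHom.map_dotProduct, h₀]

lemma iterate_comp_mem_span_twist (hι : Fintype.card ι ≤ 5) (h₀ : x ⬝ᵥ x = 0)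
    (h₁ : x ⬝ᵥ σ ∘ x = 0) (h₂ : x ⬝ᵥ σ ∘ σ ∘ x = 0) (n : ℕ) :
    σ^[n] ∘ x ∈ Submodule.span K {x, σ ∘ x} := by
  induction n with
  | zero => exact Submodule.mem_span_of_mem (by simp)
  | succ n ih =>
    obtain ⟨a, b, hab⟩ := Submodule.mem_span_pair.mp ih
    have hsucc : σ^[n + 1] ∘ x = σ a • σ ∘ x + σ b • σ ∘ σ ∘ x := by
      rw [Function.iterate_succ', Function.comp_assoc, ← hab]
      ext i
      simp
    rw [hsucc]
    exact add_mem (Submodule.smul_mem _ _ (Submodule.mem_span_of_mem (by simp)))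
      (Submodule.smul_mem _ _ (twist_twist_mem_span hι h₀ h₁ h₂))

lemma iterate_comp_dotProduct_iterate_comp (hι : Fintype.card ι ≤ 5) (h₀ : x ⬝ᵥ x = 0)
    (h₁ : x ⬝ᵥ σ ∘ x = 0) (h₂ : x ⬝ᵥ σ ∘ σ ∘ x = 0) (j k : ℕ) :
    σ^[j] ∘ x ⬝ᵥ σ^[k] ∘ x = 0 :=
  span_twist_le_orthogonal h₀ h₁ (iterate_comp_mem_span_twist hι h₀ h₁ h₂ k) _
    (iterate_comp_mem_span_twist hι h₀ h₁ h₂ j)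

end Twist

section FrobeniusSystem

variable {F K : Type*} [Field F] [Field K] [Algebra F K]

/-- Expanding `x` in the basis, the coefficients are fixed by `σ`. -/
lemma dotProduct_comp_eq_zero_of_repr {ι κ : Type*} [Fintype ι] [Finite κ]
    (b : Module.Basis κ F K) {x : ι → K}
    (h : ∀ j k, (fun i ↦ b.repr (x i) j) ⬝ᵥ (fun i ↦ b.repr (x i) k) = 0) (σ : K →ₐ[F] K) :
    x ⬝ᵥ σ ∘ x = 0 := by
  cases nonempty_fintype κ
  have hx : x = ∑ k, b k • (algebraMap F K ∘ fun i ↦ b.repr (x i) k) := by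
    ext i
    simpa [Algebra.smul_def, mul_comm] using (b.sum_repr (x i)).symm
  have hσx : σ ∘ x = ∑ k, σ (b k) • (algebraMap F K ∘ fun i ↦ b.repr (x i) k) := by
    ext i
    conv_lhs => rw [hx]
    simp
  rw [hσx]
  nth_rw 1 [hx]
  simp [sum_dotProduct, dotProduct_sum, ← RingHom.map_dotProduct, h]

variable [Fintype F]

lemma trace_dotProduct_trace_eq_zero [Finite K] {ι : Type*} [Fintype ι]
    (hι : Fintype.card ι ≤ 5) {x : ι → K} (h₀ : x ⬝ᵥ x = 0)
    (h₁ : x ⬝ᵥ x ^ Fintype.card F = 0) (h₂ : x ⬝ᵥ x ^ Fintype.card F ^ 2 = 0) (c d : K) :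
    (fun i ↦ Algebra.trace F K (x i * c)) ⬝ᵥ (fun i ↦ Algebra.trace F K (x i * d)) = 0 := by
  let σ := FiniteField.frobeniusAlgHom F K
  have hσ (n : ℕ) (y : K) : σ^[n] y = y ^ Fintype.card F ^ n := by
    simp [σ, FiniteField.coe_frobeniusAlgHom]
  have htrace (c : K) : (algebraMap F K ∘ fun i ↦ Algebra.trace F K (x i * c)) =
      ∑ n ∈ range (Module.finrank F K), (c ^ Fintype.card F ^ n) • (σ^[n] ∘ x) := by
    ext i
    simp [FiniteField.algebraMap_trace_eq_sum_pow, hσ, mul_pow, mul_comm]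
  apply FaithfulSMul.algebraMap_injective F K
  have h₂' : x ⬝ᵥ σ ∘ σ ∘ x = 0 := by
    convert h₂ using 2
    exact funext fun i ↦ hσ 2 (x i)
  have hiter (j k : ℕ) : σ^[j] ∘ x ⬝ᵥ σ^[k] ∘ x = 0 :=
    iterate_comp_dotProduct_iterate_comp (σ := (σ : K →+* K)) hι h₀ h₁ h₂' j k
  rw [RingHom.map_dotProduct, htrace, htrace]
  simp [sum_dotProduct, dotProduct_sum, hiter]

lemma repr_dotProduct_repr_eq_zero_iff [Finite K] {ι κ : Type*} [Fintype ι] [Finite κ]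
    (hι : Fintype.card ι ≤ 5) (b : Module.Basis κ F K) {x : ι → K} :
    (∀ j k, (fun i ↦ b.repr (x i) j) ⬝ᵥ (fun i ↦ b.repr (x i) k) = 0) ↔
      ∑ i, x i ^ 2 = 0 ∧ ∑ i, x i ^ (Fintype.card F + 1) = 0 ∧
        ∑ i, x i ^ (Fintype.card F ^ 2 + 1) = 0 := by
  simp only [pow_two (x _), pow_succ' (x _)]
  constructor
  · intro h
    let σ := FiniteField.frobeniusAlgHom F K
    refine ⟨dotProduct_comp_eq_zero_of_repr b h (AlgHom.id F K),
      dotProduct_comp_eq_zero_of_repr b h σ, ?_⟩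
    simpa [σ, dotProduct, ← pow_mul, ← pow_two] using dotProduct_comp_eq_zero_of_repr b h (σ.comp σ)
  · classical
    rintro ⟨h₀, h₁, h₂⟩ j k
    have hrepr (y : K) (k : κ) : b.repr y k = Algebra.trace F K (y * b.traceDual k) := by
      simpa using b.traceDual.traceDual_repr_apply y k
    simp only [hrepr]
    exact trace_dotProduct_trace_eq_zero hι h₀ h₁ h₂ _ _

lemma card_frobenius_system [Fintype K] [DecidableEq K] (hF : ringChar F ≠ 2) :
    (#{x : Fin 5 → K | ∑ i, x i ^ 2 = 0 ∧ ∑ i, x i ^ (Fintype.card F + 1) = 0 ∧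
        ∑ i, x i ^ (Fintype.card F ^ 2 + 1) = 0} : ℤ) =
      (Fintype.card F + 1) * (Fintype.card F ^ 2 + 1) * (Fintype.card K - 1) *
        (Fintype.card K - Fintype.card F + 1) + 1 := by
  let b := Module.finBasis F K
  have hq : Fintype.card F ^ Module.finrank F K = Fintype.card K :=
    (Module.card_eq_pow_finrank (K := F) (V := K)).symm
  have hcount := isotropicTupleCount_of_finrank_eq_add_five (B := dotForm F (Fin 5)) (W := ⊥)
    (Module.finrank F K) hF isSymm_dotForm nondegenerate_dotForm bot_le (by simp)
  suffices hbij : #{x : Fin 5 → K | ∑ i, x i ^ 2 = 0 ∧ ∑ i, x i ^ (Fintype.card F + 1) = 0 ∧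
        ∑ i, x i ^ (Fintype.card F ^ 2 + 1) = 0} =
      isotropicTupleCount (dotForm F (Fin 5)) (Module.finrank F K) ⊥ by
    rw [hbij, hcount, ← hq]
    simp
    ring
  classical
  refine Finset.card_equiv ((Equiv.arrowCongr (Equiv.refl _) b.equivFun.toEquiv).trans
    (Equiv.piComm _)) fun x ↦ ?_
  rw [mem_filter_univ, ← repr_dotProduct_repr_eq_zero_iff (by simp) b, mem_filter_univ]
  exact ⟨fun h ↦ ⟨h, by simp⟩, And.left⟩

end FrobeniusSystem

section QuadraticFormSum

open Module

variable {F : Type*} [Field F] [Fintype F] {R : Type*} [CommRing R] [IsDomain R]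
  {ψ : AddChar F R} {V : Type*} [AddCommGroup V] [Module F V] [Fintype V]

lemma sum_addChar_mul_quadraticForm [DecidableEq F] (hF : ringChar F ≠ 2) (hψ : ψ.IsPrimitive)
    (Q : QuadraticForm F V) {c : F} (hc : c ≠ 0) : ∑ v, ψ (c * Q v) =
      quadraticChar F c ^ (finrank F V - finrank F Q.radical) * ∑ v, ψ (Q v) := by
  obtain ⟨d, -, hd⟩ := exists_sum_addChar_quadraticForm_eq hF hψ Q
  have hone := hd 1 one_ne_zero
  simp only [one_mul, one_pow] at hone
  rw [hd c hc, hone, map_mul, map_pow]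
  push_cast
  ring

lemma sum_addChar_quadraticForm_sq [CharZero R] (hF : ringChar F ≠ 2) (hψ : ψ.IsPrimitive)
    (Q : QuadraticForm F V) (hQ : Even (finrank F V - finrank F Q.radical)) :
    (∑ v, ψ (Q v)) ^ 2 = (Fintype.card F : R) ^ (finrank F V + finrank F Q.radical) := by
  classical
  obtain ⟨d, hd0, hd⟩ := exists_sum_addChar_quadraticForm_eq hF hψ Q
  have hone := hd 1 one_ne_zero
  simp only [one_mul, one_pow] at hone
  have hd1 : (quadraticChar F d : R) ^ 2 = 1 := by exact_mod_cast quadraticChar_sq_one hd0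
  have hneg : (quadraticChar F (-1) : R) ^ (finrank F V - finrank F Q.radical) = 1 := by
    rw [← Int.cast_pow, ← map_pow, hQ.neg_one_pow, map_one, Int.cast_one]
  calc (∑ v, ψ (Q v)) ^ 2
      = (quadraticChar F d : R) ^ 2 * (Fintype.card F : R) ^ (2 * finrank F Q.radical) *
          (quadraticGaussSum ψ ^ 2) ^ (finrank F V - finrank F Q.radical) := by
        rw [hone]
        ring
    _ = (Fintype.card F : R) ^ (2 * finrank F Q.radical + (finrank F V - finrank F Q.radical)) := by
        rw [hd1, quadraticGaussSum_sq hF hψ, mul_pow, hneg, pow_add, one_mul, one_mul]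
    _ = (Fintype.card F : R) ^ (finrank F V + finrank F Q.radical) := by
        congr 1
        have := Submodule.finrank_le Q.radical
        lia

end QuadraticFormSum

section FrobeniusForm

open Module

variable {F K : Type*} [Field F] [Fintype F] [Field K] [Algebra F K]

variable (F) in
/-- The quadratic form `x ↦ Tr (αx² + βx^(r+1) + γx^(r²+1))` on `K` over `F`, where `r = |F|` and
`t = (α, β, γ)`; its exponential sums are the sums `S(α, β, γ)`. -/
noncomputable def frobeniusForm (t : K × K × K) : QuadraticForm F K :=
  let σ := (FiniteField.frobeniusAlgHom F K).toLinearMap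
  LinearMap.BilinMap.toQuadraticMap <| Algebra.traceForm F K ∘ₗ
    (LinearMap.mulLeft F t.1 + LinearMap.mulLeft F t.2.1 ∘ₗ σ + LinearMap.mulLeft F t.2.2 ∘ₗ σ ∘ₗ σ)

lemma frobeniusForm_apply (t : K × K × K) (x : K) : frobeniusForm F t x =
    Algebra.trace F K (t.1 * x ^ 2 + t.2.1 * x ^ (Fintype.card F + 1) +
      t.2.2 * x ^ (Fintype.card F ^ 2 + 1)) := by
  simp only [frobeniusForm, LinearMap.BilinMap.toQuadraticMap_apply, LinearMap.comp_apply,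
    Algebra.traceForm_apply]
  congr 1
  simp [FiniteField.coe_frobeniusAlgHom]
  ring

lemma frobeniusForm_smul_apply (c : F) (t : K × K × K) (x : K) :
    frobeniusForm F (c • t) x = c * frobeniusForm F t x := by
  rw [frobeniusForm_apply, frobeniusForm_apply, ← smul_eq_mul c, ← map_smul]
  simp [smul_add]

lemma trace_pow_card_pow [Finite K] (a : K) (n : ℕ) :
    Algebra.trace F K (a ^ Fintype.card F ^ n) = Algebra.trace F K a := by
  induction n with
  | zero => simp
  | succ n ih =>
    rw [pow_succ, pow_mul, ← ih, ← Algebra.trace_eq_of_algEquiv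
      (FiniteField.frobeniusAlgEquivOfAlgebraic F K) (a ^ _),
      FiniteField.coe_frobeniusAlgEquivOfAlgebraic]

variable (F) in
/-- The coefficients of the linearized polynomial `∑ᵢ aᵢ X^(rⁱ)` whose roots in `K` contain the
radical of `frobeniusForm F t`. -/
def radicalCoeff (t : K × K × K) : Fin 5 → K :=
  ![t.2.2, t.2.1 ^ Fintype.card F, 2 * t.1 ^ Fintype.card F ^ 2, t.2.1 ^ Fintype.card F ^ 2,
    t.2.2 ^ Fintype.card F ^ 2]

lemma polar_frobeniusForm [Finite K] (t : K × K × K) (x y : K) :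
    QuadraticMap.polar (frobeniusForm F t) x y = Algebra.trace F K
      (y ^ Fintype.card F ^ 2 * ∑ i, radicalCoeff F t i * x ^ Fintype.card F ^ (i : ℕ)) := by
  have hα := trace_pow_card_pow (F := F) (t.1 * x * y) 2
  have hβ := trace_pow_card_pow (F := F) (t.2.1 * x ^ Fintype.card F * y) 2
  have hβ' := trace_pow_card_pow (F := F) (t.2.1 * x * y ^ Fintype.card F) 1
  have hγ := trace_pow_card_pow (F := F) (t.2.2 * x ^ Fintype.card F ^ 2 * y) 2
  calc QuadraticMap.polar (frobeniusForm F t) x y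
      = Algebra.trace F K (t.1 * x * y) + Algebra.trace F K (t.1 * x * y) +
          Algebra.trace F K (t.2.1 * x ^ Fintype.card F * y) +
          Algebra.trace F K (t.2.1 * x * y ^ Fintype.card F) +
          Algebra.trace F K (t.2.2 * x ^ Fintype.card F ^ 2 * y) +
          Algebra.trace F K (t.2.2 * x * y ^ Fintype.card F ^ 2) := by
        simp only [← map_add, frobeniusForm, LinearMap.BilinMap.polar_toQuadraticMap,
          LinearMap.comp_apply, Algebra.traceForm_apply]
        congr 1
        simp [FiniteField.coe_frobeniusAlgHom]
        ring
    _ = _ := by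
        rw [← hα, ← hβ, ← hβ', ← hγ]
        simp only [← map_add]
        congr 1
        simp only [radicalCoeff, Fin.sum_univ_five, Matrix.cons_val]
        simp
        ring

lemma sum_mul_pow_eq_zero_of_mem_radical [Finite K] {t : K × K × K} {x : K}
    (hx : x ∈ (frobeniusForm F t).radical) :
    ∑ i, radicalCoeff F t i * x ^ Fintype.card F ^ (i : ℕ) = 0 := by
  obtain ⟨hx₀, hx⟩ := QuadraticMap.mem_radical_iff'.mp hx
  refine (traceForm_nondegenerate F K).1 _ fun a ↦ ?_
  obtain ⟨y, rfl⟩ : ∃ y, y ^ Fintype.card F ^ 2 = a := by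
    let e := FiniteField.frobeniusAlgEquivOfAlgebraic F K
    obtain ⟨y, rfl⟩ := (e.trans e).surjective a
    exact ⟨y, by simp [e, ← pow_mul, ← pow_two]⟩
  rw [Algebra.traceForm_apply, mul_comm, ← polar_frobeniusForm, QuadraticMap.polar, hx y, hx₀]
  simp

open Polynomial in
lemma card_filter_sum_mul_pow_pow_eq_zero_le {K : Type*} [Field K] [Fintype K] [DecidableEq K]
    {n r : ℕ} (hr : 1 < r) {a : Fin (n + 1) → K} (ha : a ≠ 0) :
    #{x | ∑ i, a i * x ^ r ^ (i : ℕ) = 0} ≤ r ^ n := by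
  let P : K[X] := ∑ i, C (a i) * X ^ r ^ (i : ℕ)
  have hcoeff (i : Fin (n + 1)) : P.coeff (r ^ (i : ℕ)) = a i := by
    simp [P, coeff_X_pow, (Nat.pow_right_injective hr).eq_iff, Fin.val_inj]
  have hP : P ≠ 0 := fun h ↦ ha <| funext fun i ↦ by simp [← hcoeff, h]
  have hdeg : P.natDegree ≤ r ^ n := natDegree_sum_le_of_forall_le _ _ fun i _ ↦
    (natDegree_C_mul_X_pow_le _ _).trans (Nat.pow_le_pow_right hr.le (by lia))
  refine (card_le_degree_of_subset_roots fun x hx ↦ ?_).trans hdeg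
  simpa [mem_roots hP, P, eval_finsetSum] using hx

lemma finrank_radical_frobeniusForm_le [Finite K] (hF : ringChar F ≠ 2) {t : K × K × K}
    (ht : t ≠ 0) : finrank F (frobeniusForm F t).radical ≤ 4 := by
  classical
  cases nonempty_fintype K
  have h2 : (2 : K) ≠ 0 := by
    rw [← map_ofNat (algebraMap F K) 2, map_ne_zero]
    exact Ring.two_ne_zero hF
  have hcoeff : radicalCoeff F t ≠ 0 := fun h ↦ ht <|
    Prod.ext (by simpa [radicalCoeff, h2] using congrFun h 2) <|
      Prod.ext (by simpa [radicalCoeff] using congrFun h 1) (congrFun h 0)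
  refine (Nat.pow_le_pow_iff_right (Fintype.one_lt_card (α := F))).mp ?_
  rw [← card_eq_pow_finrank (K := F) (V := (frobeniusForm F t).radical), Fintype.card_subtype]
  refine (Finset.card_le_card fun x hx ↦ ?_).trans
    (card_filter_sum_mul_pow_pow_eq_zero_le Fintype.one_lt_card hcoeff)
  simpa using sum_mul_pow_eq_zero_of_mem_radical (mem_filter.mp hx).2

end FrobeniusForm

section OddSum

variable {ι R : Type*} [CommRing R] [IsDomain R] [CharZero R] {s : Finset ι} {e : ι ≃ ι} {S : ι → R}

lemma sum_comp_eq_zero_of_odd {g : R → R} (hg : g.Odd) (he : ∀ t, t ∈ s ↔ e t ∈ s)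
    (hS : ∀ t ∈ s, S (e t) = -S t ∨ S (e t) = S t ∧ g (S t) = 0) : ∑ t ∈ s, g (S t) = 0 := by
  refine self_eq_neg.mp ?_
  rw [← Finset.sum_neg_distrib]
  refine (Finset.sum_equiv e he fun t ht ↦ ?_).symm
  rcases hS t ht with h | ⟨h, hgS⟩
  · rw [h, hg]
  · rw [h, hgS, neg_zero]

/-- Subtracting from `f` its values at the points `± v l` leaves an odd function. -/
lemma sum_comp_eq_of_odd [DecidableEq R] {f : R → R} (hf : f.Odd) {n : ℕ} {v : ℕ → R}
    (hv : Set.InjOn v (range n)) (hneg : ∀ k < n, ∀ l < n, v k ≠ -v l)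
    (he : ∀ t, t ∈ s ↔ e t ∈ s)
    (hS : ∀ t ∈ s, S (e t) = -S t ∨ S (e t) = S t ∧ ∃ l < n, S t = v l ∨ S t = -v l) :
    ∑ t ∈ s, f (S t) =
      ∑ l ∈ range n, ((#{t ∈ s | S t = v l} : R) - #{t ∈ s | S t = -v l}) * f (v l) := by
  let g (y : R) : R :=
    ∑ l ∈ range n, ((if y = v l then 1 else 0) - if y = -v l then 1 else 0) * f (v l)
  have hodd : (f - g).Odd := fun y ↦ by
    simp only [Pi.sub_apply, hf y, g, neg_eq_iff_eq_neg, neg_sub', neg_neg,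
      ← Finset.sum_neg_distrib]
    congr 1
    exact Finset.sum_congr rfl fun l _ ↦ by ring
  have hfix : ∀ l < n, (f - g) (v l) = 0 := fun l hl ↦ by
    have hterm : ∀ k ∈ range n, ((if v l = v k then 1 else 0) - if v l = -v k then 1 else 0) *
        f (v k) = if k = l then f (v l) else 0 := fun k hk ↦ by
      have hvk : v l = v k ↔ l = k := hv.eq_iff (by simpa) hk
      rw [if_neg (hneg l hl k (mem_range.mp hk))]
      simp only [hvk, eq_comm (a := l)]
      split_ifs with h <;> simp [h]
    simp [g, Finset.sum_congr rfl hterm, hl]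
  have hzero : ∑ t ∈ s, (f - g) (S t) = 0 := by
    refine sum_comp_eq_zero_of_odd hodd he fun t ht ↦ (hS t ht).imp_right ?_
    rintro ⟨h, l, hl, hSt | hSt⟩
    · exact ⟨h, by rw [hSt, hfix l hl]⟩
    · exact ⟨h, by rw [hSt, hodd, hfix l hl, neg_zero]⟩
  rw [← sub_eq_zero, ← hzero]
  simp only [Pi.sub_apply, Finset.sum_sub_distrib, g]
  rw [Finset.sum_comm]
  simp [← Finset.sum_mul]

end OddSum

section FrobeniusSum

open Module

lemma isPrimitive_compAddMonoidHom_trace {F R : Type*} [Field F] [CommRing R] {ψ : AddChar F R}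
    (hψ : ψ.IsPrimitive) (K : Type*) [Field K] [Algebra F K] [FiniteDimensional F K]
    [Algebra.IsSeparable F K] :
    (ψ.compAddMonoidHom (Algebra.trace F K).toAddMonoidHom).IsPrimitive := by
  obtain ⟨a, ha⟩ := AddChar.ne_one_iff.mp (hψ one_ne_zero)
  obtain ⟨b, rfl⟩ := Algebra.trace_surjective F K a
  exact AddChar.IsPrimitive.of_ne_one (AddChar.ne_one_iff.mpr ⟨b, by simpa using ha⟩)

variable {F K : Type*} [Field F] [Fintype F] [Field K] [Fintype K] [Algebra F K]
  {R : Type*} [CommRing R]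

/-- The exponential sum `S(α, β, γ)` at `t = (α, β, γ)`, for an additive character `ψ` of `F` in
place of `a ↦ ζ_p ^ a`. -/
noncomputable def frobeniusSum (ψ : AddChar F R) (t : K × K × K) : R :=
  ∑ x, ψ (frobeniusForm F t x)

variable {ψ : AddChar F R}

lemma frobeniusSum_zero : frobeniusSum ψ (0 : K × K × K) = Fintype.card K := by
  simp [frobeniusSum, frobeniusForm_apply]

/-- The number of `(α, β, γ) ≠ 0` with `S(α, β, γ) = v`. -/
noncomputable def frobeniusSumCount (K : Type*) [Field K] [Fintype K] [Algebra F K]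
    (ψ : AddChar F R) (v : R) : ℕ :=
  {t : K × K × K | t ≠ 0 ∧ frobeniusSum ψ t = v}.ncard

lemma frobeniusSumCount_eq_card [DecidableEq K] [DecidableEq R] (v : R) :
    frobeniusSumCount K ψ v = #{t ∈ univ.erase (0 : K × K × K) | frobeniusSum ψ t = v} := by
  rw [frobeniusSumCount, ← Set.ncard_coe_finset]
  congr 1
  ext
  simp

variable [IsDomain R]

lemma sum_frobeniusSum_pow [DecidableEq K] (hψ : ψ.IsPrimitive) (n : ℕ) :
    ∑ t : K × K × K, frobeniusSum ψ t ^ n = (Fintype.card K : R) ^ 3 *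
      #{x : Fin n → K | ∑ i, x i ^ 2 = 0 ∧ ∑ i, x i ^ (Fintype.card F + 1) = 0 ∧
        ∑ i, x i ^ (Fintype.card F ^ 2 + 1) = 0} := by
  let χ := ψ.compAddMonoidHom (Algebra.trace F K).toAddMonoidHom
  have hsum (y : Fin n → K) : χ (∑ i, y i) = ∏ i, χ (y i) :=
    map_prod χ.toMonoidHom (fun i ↦ Multiplicative.ofAdd (y i)) univ
  have hexpand (t : K × K × K) (x : Fin n → K) : ∏ i, ψ (frobeniusForm F t (x i)) =
      χ (t.1 * ∑ i, x i ^ 2) * (χ (t.2.1 * ∑ i, x i ^ (Fintype.card F + 1)) *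
        χ (t.2.2 * ∑ i, x i ^ (Fintype.card F ^ 2 + 1))) := by
    have hterm (i : Fin n) : ψ (frobeniusForm F t (x i)) = χ (t.1 * x i ^ 2) *
        (χ (t.2.1 * x i ^ (Fintype.card F + 1)) * χ (t.2.2 * x i ^ (Fintype.card F ^ 2 + 1))) := by
      simp [χ, frobeniusForm_apply, AddChar.map_add_eq_mul, mul_assoc]
    simp only [hterm, Finset.prod_mul_distrib, Finset.mul_sum, hsum]
  simp only [frobeniusSum, Fintype.sum_pow, hexpand]
  rw [Finset.sum_comm]
  simp only [Fintype.sum_prod_type, ← Finset.mul_sum, ← Finset.sum_mul,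
    AddChar.sum_mulShift _ (isPrimitive_compAddMonoidHom_trace hψ K), χ]
  rw [Finset.card_filter, Nat.cast_sum, Finset.mul_sum]
  refine Finset.sum_congr rfl fun x _ ↦ ?_
  split_ifs <;> grind

variable [CharZero R]

lemma frobeniusSum_smul_eq (hF : ringChar F ≠ 2) (hψ : ψ.IsPrimitive) {h : ℕ}
    (hK : finrank F K = 2 * h) {t : K × K × K} (ht : t ≠ 0) {c : F} (hc : ¬IsSquare c) :
    frobeniusSum ψ (c • t) = -frobeniusSum ψ t ∨
      frobeniusSum ψ (c • t) = frobeniusSum ψ t ∧ ∃ l < 3,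
        frobeniusSum ψ t = (Fintype.card F : R) ^ (h + l) ∨
          frobeniusSum ψ t = -(Fintype.card F : R) ^ (h + l) := by
  classical
  have hc0 : c ≠ 0 := by rintro rfl; exact hc IsSquare.zero
  have hsmul := sum_addChar_mul_quadraticForm hF hψ (frobeniusForm F t) hc0
  rw [quadraticChar_neg_one_iff_not_isSquare.mpr hc] at hsmul
  simp only [← frobeniusForm_smul_apply, ← frobeniusSum.eq_1] at hsmul
  have hle := finrank_radical_frobeniusForm_le hF ht
  have hdim := Submodule.finrank_le (frobeniusForm F t).radical
  rcases Nat.even_or_odd (finrank F K - finrank F (frobeniusForm F t).radical) with hpar | hpar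
  · right
    have hsq := sum_addChar_quadraticForm_sq hF hψ (frobeniusForm F t) hpar
    obtain ⟨l, hl⟩ : ∃ l, finrank F (frobeniusForm F t).radical = 2 * l := by
      obtain ⟨k, hk⟩ := hpar
      exact ⟨h - k, by lia⟩
    refine ⟨by simpa [hpar.neg_one_pow] using hsmul, l, by lia, ?_⟩
    rw [← sq_eq_sq_iff_eq_or_eq_neg, frobeniusSum, hsq, hK, hl, ← mul_add, mul_comm, pow_mul]
  · left
    simpa [hpar.neg_one_pow] using hsmul

lemma sum_frobeniusSum_pow_of_odd [DecidableEq K] (hF : ringChar F ≠ 2) (hψ : ψ.IsPrimitive)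
    {h n : ℕ} (hK : finrank F K = 2 * h) (hn : Odd n) :
    ∑ t ∈ univ.erase (0 : K × K × K), frobeniusSum ψ t ^ n = ∑ l ∈ range 3,
      ((frobeniusSumCount K ψ ((Fintype.card F : R) ^ (h + l)) : R) -
        frobeniusSumCount K ψ (-(Fintype.card F : R) ^ (h + l))) *
          ((Fintype.card F : R) ^ (h + l)) ^ n := by
  classical
  obtain ⟨c, hc⟩ := FiniteField.exists_nonsquare hF
  have hc0 : c ≠ 0 := by rintro rfl; exact hc IsSquare.zero
  simp only [frobeniusSumCount_eq_card]
  refine sum_comp_eq_of_odd (e := MulAction.toPerm (Units.mk0 c hc0)) (f := (· ^ n))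
    (fun y ↦ hn.neg_pow y) (v := fun l ↦ (Fintype.card F : R) ^ (h + l)) ?_ ?_ ?_ ?_
  · intro k _ l _ hkl
    exact add_left_cancel <|
      Nat.pow_right_injective (Fintype.one_lt_card (α := F)) (Nat.cast_injective (R := R)
        (by push_cast; exact hkl))
  · intro k _ l _ hkl
    have hpos : 0 < Fintype.card F ^ (h + k) + Fintype.card F ^ (h + l) := by positivity
    exact hpos.ne' (by exact_mod_cast eq_neg_iff_add_eq_zero.mp hkl)
  · simp [Units.smul_def, hc0]
  · exact fun t ht ↦ frobeniusSum_smul_eq hF hψ hK (ne_of_mem_erase ht) hc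

theorem sum_frobeniusSumCount_sub_mul_pow (hF : ringChar F ≠ 2) (hψ : ψ.IsPrimitive) {h : ℕ}
    (hK : finrank F K = 2 * h) :
    ∑ l ∈ range 3, ((frobeniusSumCount K ψ ((Fintype.card F : R) ^ (h + l)) : ℤ) -
        frobeniusSumCount K ψ (-(Fintype.card F : R) ^ (h + l))) * (Fintype.card F : ℤ) ^ (5 * l) =
      ((Fintype.card F + 1) * (Fintype.card F ^ 2 + 1) * (Fintype.card K - 1) *
        (Fintype.card K - Fintype.card F + 1) + 1 - (Fintype.card K : ℤ) ^ 2) *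
          (Fintype.card F : ℤ) ^ h := by
  classical
  have hmoment := sum_frobeniusSum_pow (K := K) hψ 5
  rw [← Finset.add_sum_erase _ _ (mem_univ 0), frobeniusSum_zero,
    sum_frobeniusSum_pow_of_odd hF hψ hK (by decide)] at hmoment
  have hsystem := congr_arg (Int.cast : ℤ → R) (card_frobenius_system (K := K) hF)
  push_cast at hsystem
  rw [hsystem] at hmoment
  have hcard : (Fintype.card K : R) = (Fintype.card F ^ h) ^ 2 := by
    rw [Module.card_eq_pow_finrank (K := F), hK, mul_comm, pow_mul]
    push_cast
    rfl
  refine Int.cast_injective (α := R) ?_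
  refine mul_left_cancel₀ (pow_ne_zero 5 (pow_ne_zero h
    (Nat.cast_ne_zero.mpr (Fintype.card_ne_zero (α := F))))) ?_
  push_cast
  rw [hcard] at hmoment ⊢
  simp only [Finset.sum_range_succ, Finset.sum_range_zero] at hmoment ⊢
  linear_combination hmoment

end FrobeniusSum

section Specialization

lemma zetaPow_eq_stdAddChar (p : ℕ) [NeZero p] (a : ZMod p) :
    zetaPow p a = ZMod.stdAddChar a := by
  rw [ZMod.stdAddChar_apply, ZMod.toCircle_apply, zetaPow]

lemma nn_eq_frobeniusSumCount (p m : ℕ) [Fact p.Prime] [Fintype (GaloisField p m)] (ε : ℤ)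
    (j : ℕ) : nn p m ε j =
      frobeniusSumCount (GaloisField p m) (ZMod.stdAddChar (N := p)) (nval p m ε j) := by
  have hS (t : GaloisField p m × GaloisField p m × GaloisField p m) :
      expSum p m t.1 t.2.1 t.2.2 = frobeniusSum (ZMod.stdAddChar (N := p)) t := by
    unfold expSum frobeniusSum
    refine Finset.sum_congr (by ext; simp) fun x _ ↦ ?_
    rw [zetaPow_eq_stdAddChar, frobeniusForm_apply, ZMod.card]
  simp only [nn, frobeniusSumCount, hS]
  rfl

lemma nval_two_mul_two_mul (p h l : ℕ) (ε : ℤ) :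
    nval p (2 * h) ε (2 * l) = ε * (p : ℂ) ^ (h + l) := by
  have hsqrt : √((p : ℝ) ^ (2 * h + 2 * l)) = p ^ (h + l) := by
    rw [← mul_add, mul_comm, pow_mul, Real.sqrt_sq (by positivity)]
  rw [nval, if_pos (by lia), hsqrt]
  push_cast
  rfl

theorem fifth_moment_identity_general (p m : ℕ) [Fact p.Prime] (hp : p ≠ 2) (hm : 0 < m)
    (hme : Even m) :
    (nn p m 1 0 : ℤ) - nn p m (-1) 0 +
      (p : ℤ) ^ 5 * ((nn p m 1 2 : ℤ) - nn p m (-1) 2) +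
      (p : ℤ) ^ 10 * ((nn p m 1 4 : ℤ) - nn p m (-1) 4) =
      ((p + 1) * (p ^ 2 + 1) * ((p : ℤ) ^ m - 1) * ((p : ℤ) ^ m - p + 1) - (p : ℤ) ^ (2 * m) + 1) *
        (p : ℤ) ^ (m / 2) := by
  obtain ⟨h, rfl⟩ := hme.exists_two_nsmul
  rw [smul_eq_mul] at hm ⊢
  let _ : Fintype (GaloisField p (2 * h)) := Fintype.ofFinite _
  have hcard : Fintype.card (GaloisField p (2 * h)) = p ^ (2 * h) := by
    rw [← Nat.card_eq_fintype_card, GaloisField.card p _ hm.ne']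
  have hpos (l : ℕ) : frobeniusSumCount (GaloisField p (2 * h)) (ZMod.stdAddChar (N := p))
      ((p : ℂ) ^ (h + l)) = nn p (2 * h) 1 (2 * l) := by
    rw [nn_eq_frobeniusSumCount, nval_two_mul_two_mul, Int.cast_one, one_mul]
  have hneg (l : ℕ) : frobeniusSumCount (GaloisField p (2 * h)) (ZMod.stdAddChar (N := p))
      (-(p : ℂ) ^ (h + l)) = nn p (2 * h) (-1) (2 * l) := by
    rw [nn_eq_frobeniusSumCount, nval_two_mul_two_mul, Int.cast_neg, Int.cast_one, neg_one_mul]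
  have hsum := sum_frobeniusSumCount_sub_mul_pow (by rwa [ZMod.ringChar_zmod_n])
    (ZMod.isPrimitive_stdAddChar p) (GaloisField.finrank p hm.ne')
  simp only [ZMod.card, hpos, hneg, hcard, Finset.sum_range_succ, Finset.sum_range_zero] at hsum
  rw [Nat.mul_div_cancel_left _ two_pos]
  push_cast at hsum
  linear_combination hsum

end Specialization

theorem fifth_moment_identity (m : ℕ) (hm : 0 < m) (hme : Even m) :
    letI : Fact (Nat.Prime 3) := ⟨by norm_num⟩
    (nn 3 m 1 0 : ℤ) - nn 3 m (-1) 0 +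
      (3 : ℤ) ^ 5 * ((nn 3 m 1 2 : ℤ) - nn 3 m (-1) 2) +
      (3 : ℤ) ^ 10 * ((nn 3 m 1 4 : ℤ) - nn 3 m (-1) 4) =
      (5 * ((3 : ℤ) ^ m - 1) * (8 * (3 : ℤ) ^ m - 2 * 3 - 10) - (3 : ℤ) ^ (2 * m) + 1) *
        (3 : ℤ) ^ (m / 2) := by
  let _ : Fact (Nat.Prime 3) := ⟨by norm_num⟩
  exact (fifth_moment_identity_general 3 m (by norm_num) hm hme).trans (by push_cast; ring)
end

section
/- Let p be an odd prime with p ≡ 3 (mod 4), m a positive integer, and q = p^m. Then Σ_{(α,β,γ) ∈ F_q³} S(α,β,γ)² = p^{3m}. -/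
/-!
For each `x`, the map `(α, β, γ) ↦ ζ_p ^ Tr (α x² + β x ^ (p + 1) + γ x ^ (p² + 1))` is an additive
character of `F_q³`. By orthogonality of characters, the second moment is `q³` times the number of
pairs `(x, y)` whose characters multiply to the trivial one, that is, of common zeros of
`x² + y²`, `x ^ (p + 1) + y ^ (p + 1)` and `x ^ (p² + 1) + y ^ (p² + 1)`. If `p ≡ 3 (mod 4)` then
`(p + 1) / 2` is even, so `y² = -x²` forces `y ^ (p + 1) = x ^ (p + 1)`, and the second form takes
the value `2 x ^ (p + 1)`. The origin is therefore the only common zero.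
-/

open Complex Finset

section Characters

theorem addChar_sum_eq_prod {ι A M : Type*} [AddCommMonoid A] [CommMonoid M] (ψ : AddChar A M)
    (s : Finset ι) (f : ι → A) : ψ (∑ i ∈ s, f i) = ∏ i ∈ s, ψ (f i) :=
  map_prod ψ.toMonoidHom (fun i ↦ Multiplicative.ofAdd (f i)) s

theorem addChar_compAddMonoidHom_linearMap_eq_one_iff {K V M : Type*} [DivisionRing K]
    [AddCommGroup V] [Module K V] [Monoid M] {ψ : AddChar K M} (hψ : ψ ≠ 1) {f : V →ₗ[K] K} :
    ψ.compAddMonoidHom f.toAddMonoidHom = 1 ↔ f = 0 := by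
  refine ⟨fun h ↦ ?_, fun h ↦ by ext; simp [h]⟩
  by_contra hf
  exact hψ (AddChar.compAddMonoidHom_injective_left f.toAddMonoidHom
    (LinearMap.surjective_of_ne_zero hf) h)

end Characters

section Moments

variable {ι R : Type*} [Fintype ι] [CommSemiring R] [IsDomain R]

theorem sum_sum_addChar_pow {A : Type*} [AddGroup A] [Fintype A] (χ : ι → AddChar A R) (k : ℕ) :
    ∑ a, (∑ i, χ i a) ^ k =
      Fintype.card A * ({v : Fin k → ι | ∏ j, χ (v j) = 1}.ncard : R) := by
  classical
  calc ∑ a, (∑ i, χ i a) ^ k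
    _ = ∑ v : Fin k → ι, ∑ a, (∏ j, χ (v j)) a := by
      simp_rw [Fintype.sum_pow, AddChar.prod_apply]
      exact Finset.sum_comm
    _ = ∑ v : Fin k → ι, if ∏ j, χ (v j) = 1 then (Fintype.card A : R) else 0 := by
      simp_rw [AddChar.sum_eq_ite, AddChar.one_eq_zero]
    _ = Fintype.card A * ({v : Fin k → ι | ∏ j, χ (v j) = 1}.ncard : R) := by
      rw [← Finset.sum_filter, Finset.sum_const, nsmul_eq_mul, mul_comm,
        Set.ncard_eq_toFinset_card', Set.toFinset_ofPred]

variable {K V : Type*} [DivisionRing K] [AddCommGroup V] [Module K V] [Fintype V]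

theorem sum_sum_addChar_linearMap_pow {ψ : AddChar K R} (hψ : ψ ≠ 1)
    (f : ι → V →ₗ[K] K) (k : ℕ) :
    ∑ v, (∑ i, ψ (f i v)) ^ k =
      Fintype.card V * ({w : Fin k → ι | ∑ j, f (w j) = 0}.ncard : R) := by
  have hprod (w : Fin k → ι) : ∏ j, ψ.compAddMonoidHom (f (w j)).toAddMonoidHom =
      ψ.compAddMonoidHom (∑ j, f (w j)).toAddMonoidHom := by
    ext v
    simp [AddChar.prod_apply, addChar_sum_eq_prod]
  simpa [hprod, addChar_compAddMonoidHom_linearMap_eq_one_iff hψ] using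
    sum_sum_addChar_pow (fun i ↦ ψ.compAddMonoidHom (f i).toAddMonoidHom) k

end Moments

section Trinomial

/-- Evaluation at `x` of the trinomial `α X ^ a + β X ^ b + γ X ^ c`, as a linear form in its
coefficients `(α, β, γ)`. -/
def trinomialEval {K : Type*} [Semiring K] (a b c : ℕ) (x : K) : K × K × K →ₗ[K] K :=
  (LinearMap.toSpanSingleton K K (x ^ a)).coprod
    ((LinearMap.toSpanSingleton K K (x ^ b)).coprod (LinearMap.toSpanSingleton K K (x ^ c)))

theorem trinomialEval_apply {K : Type*} [Semiring K] (a b c : ℕ) (x : K) (t : K × K × K) :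
    trinomialEval a b c x t = t.1 * x ^ a + t.2.1 * x ^ b + t.2.2 * x ^ c := by
  simp [trinomialEval, add_assoc]

theorem trinomialEval_add_eq_zero_iff {K : Type*} [Semiring K] {a b c : ℕ} {x y : K} :
    trinomialEval a b c x + trinomialEval a b c y = 0 ↔
      x ^ a + y ^ a = 0 ∧ x ^ b + y ^ b = 0 ∧ x ^ c + y ^ c = 0 := by
  simp [LinearMap.prod_ext_iff, LinearMap.ext_ring_iff, trinomialEval]

variable {K : Type*} [Ring K] [NoZeroDivisors K] {a b c : ℕ}

theorem eq_zero_of_pow_add_pow_eq_zero (h2 : (2 : K) ≠ 0) (hab : 2 * a ∣ b) (hb : b ≠ 0) {x y : K}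
    (hxya : x ^ a + y ^ a = 0) (hxyb : x ^ b + y ^ b = 0) : x = 0 ∧ y = 0 := by
  obtain ⟨k, rfl⟩ := hab
  have hpow : y ^ (2 * a * k) = x ^ (2 * a * k) := by
    rw [mul_right_comm, mul_comm, pow_mul, pow_mul x, eq_neg_of_add_eq_zero_right hxya,
      (even_two_mul k).neg_pow]
  have hx : x ^ (2 * a * k) = 0 := by
    rw [hpow, ← two_mul] at hxyb
    exact (mul_eq_zero.mp hxyb).resolve_left h2
  exact ⟨pow_eq_zero_iff hb |>.mp hx, pow_eq_zero_iff hb |>.mp (hpow.trans hx)⟩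

theorem trinomialEval_add_eq_zero_iff_eq_zero (h2 : (2 : K) ≠ 0) (hab : 2 * a ∣ b) (hb : b ≠ 0)
    (hc : c ≠ 0) {x y : K} :
    trinomialEval a b c x + trinomialEval a b c y = 0 ↔ x = 0 ∧ y = 0 := by
  rw [trinomialEval_add_eq_zero_iff]
  refine ⟨fun ⟨ha', hb', _⟩ ↦ eq_zero_of_pow_add_pow_eq_zero h2 hab hb ha' hb', ?_⟩
  rintro ⟨rfl, rfl⟩
  have ha : a ≠ 0 := by
    rintro rfl
    exact hb (zero_dvd_iff.mp hab)
  simp [ha, hb, hc]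

end Trinomial

section Trace

theorem stdAddChar_eq_zetaPow {N : ℕ} [NeZero N] (a : ZMod N) :
    ZMod.stdAddChar a = zetaPow N a := by
  rw [ZMod.stdAddChar_apply, ZMod.toCircle_apply, zetaPow]

/-- The canonical additive character `x ↦ ζ_p ^ Tr x` of a finite field `F` of
characteristic `p`. -/
noncomputable def traceAddChar (p : ℕ) [Fact p.Prime] (F : Type*) [Field F]
    [Algebra (ZMod p) F] : AddChar F ℂ :=
  ZMod.stdAddChar.compAddMonoidHom (Algebra.trace (ZMod p) F).toAddMonoidHom

theorem traceAddChar_ne_one (p : ℕ) [Fact p.Prime] (F : Type*) [Field F] [Finite F]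
    [Algebra (ZMod p) F] : traceAddChar p F ≠ 1 := by
  intro h
  have hstd : ZMod.stdAddChar (N := p) = 1 :=
    AddChar.compAddMonoidHom_injective_left (Algebra.trace (ZMod p) F).toAddMonoidHom
      (Algebra.trace_surjective (ZMod p) F) h
  exact one_ne_zero (ZMod.injective_stdAddChar (N := p) (by simp [hstd]) : (1 : ZMod p) = 0)

theorem traceAddChar_apply {p : ℕ} [Fact p.Prime] {F : Type*} [Field F] [Algebra (ZMod p) F]
    (x : F) : traceAddChar p F x = zetaPow p (Algebra.trace (ZMod p) F x) :=
  stdAddChar_eq_zetaPow _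

theorem expSum_eq_sum_traceAddChar (p m : ℕ) [Fact p.Prime] [Fintype (GaloisField p m)]
    (α β γ : GaloisField p m) :
    expSum p m α β γ = ∑ x, traceAddChar p (GaloisField p m)
      (α * x ^ 2 + β * x ^ (p + 1) + γ * x ^ (p ^ 2 + 1)) := by
  obtain rfl := Subsingleton.elim ‹Fintype (GaloisField p m)› (Fintype.ofFinite _)
  simp only [expSum, traceAddChar_apply]

end Trace

theorem sum_S_second_moment_general {K : Type*} [Field K] [Fintype K] {R : Type*}
    [CommSemiring R] [IsDomain R] {ψ : AddChar K R} (hψ : ψ ≠ 1) (h2 : (2 : K) ≠ 0) {a b c : ℕ}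
    (hab : 2 * a ∣ b) (hb : b ≠ 0) (hc : c ≠ 0) :
    ∑ t : K × K × K, (∑ x, ψ (t.1 * x ^ a + t.2.1 * x ^ b + t.2.2 * x ^ c)) ^ 2 =
      (Fintype.card K : R) ^ 3 := by
  have hzeros : {w : Fin 2 → K | ∑ j, trinomialEval a b c (w j) = 0} = {0} := by
    ext w
    simp [trinomialEval_add_eq_zero_iff_eq_zero h2 hab hb hc, funext_iff, Fin.forall_fin_two]
  calc ∑ t : K × K × K, (∑ x, ψ (t.1 * x ^ a + t.2.1 * x ^ b + t.2.2 * x ^ c)) ^ 2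
    _ = ∑ t, (∑ x, ψ (trinomialEval a b c x t)) ^ 2 := by simp_rw [trinomialEval_apply]
    _ = Fintype.card (K × K × K) := by
      rw [sum_sum_addChar_linearMap_pow hψ, hzeros, Set.ncard_singleton, Nat.cast_one, mul_one]
    _ = (Fintype.card K : R) ^ 3 := by
      simp only [Fintype.card_prod, Nat.cast_mul]
      ring

theorem sum_S_second_moment (p : ℕ) [Fact p.Prime] (hp4 : p % 4 = 3)
    (m : ℕ) (hm : 0 < m) :
    letI : Fintype (GaloisField p m) := Fintype.ofFinite _
    ∑ t : GaloisField p m × GaloisField p m × GaloisField p m,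
      (expSum p m t.1 t.2.1 t.2.2) ^ 2 = (p : ℂ) ^ (3 * m) := by
  let _ : Fintype (GaloisField p m) := Fintype.ofFinite _
  have h2 : (2 : GaloisField p m) ≠ 0 := Ring.two_ne_zero (by rw [ringChar.eq _ p]; omega)
  simpa only [expSum_eq_sum_traceAddChar, Fintype.card_eq_nat_card, GaloisField.card p m hm.ne',
    Nat.cast_pow, ← pow_mul'] using
    sum_S_second_moment_general (traceAddChar_ne_one p (GaloisField p m)) h2
      (show 2 * 2 ∣ p + 1 by omega) p.succ_ne_zero (p ^ 2).succ_ne_zero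
end
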